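/- arXiv:0810.3451 — 4 statements merged into one kernel-verified Lean document; each statement's English description precedes it below -/
import Mathlib

section
/- Let M = (X, A, P, R, γ) and M̄ = (X, A, P̄, R̄, γ) be two finite MDPs over the same state set X, action set A and discount factor γ ∈ [0,1), differing only in their transition and reward functions, and suppose the rewards of M satisfy 0 ≤ R(x,a,y) ≤ R⁰ for all (x,a,y). Let ε > 0 and set ε' := (1−γ)² ε / ( |X| (1 − γ + R⁰) ). If |P(x,a,y) R(x,a,y) − P̄(x,a,y) R̄(x,a,y)| ≤ ε' and |P(x,a,y) − P̄(x,a,y)| ≤ ε' for all (x,a,y) ∈ X × A × X, then for every stationary policy π and every (x,a) ∈ X × A, |Q^π_M(x,a) − Q^π_M̄(x,a)| ≤ ε. -/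
/-- A self-improving bound on a finite table gives the geometric bound. -/
theorem contraction_bound {X A : Type*} [Fintype X] [Nonempty X] [Fintype A] [Nonempty A]
    (γ c : ℝ) (hγ1 : γ < 1) (f : X → A → ℝ)
    (h : ∀ D, (∀ x a, |f x a| ≤ D) → ∀ x a, |f x a| ≤ c + γ * D) :
    ∀ x a, |f x a| ≤ c / (1 - γ) := by
  obtain ⟨p, hp⟩ := Finite.exists_max (fun p : X × A => |f p.1 p.2|)
  have hm : ∀ x a, |f x a| ≤ |f p.1 p.2| := fun x a => hp (x, a)
  have h1 := h _ hm p.1 p.2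
  intro x a
  refine (hm x a).trans ?_
  rw [le_div_iff₀ (by linarith)]
  linarith

/-- A weighted average is bounded by any bound on its entries. -/
theorem average_bound {B : Type*} [Fintype B] (w g : B → ℝ) (D : ℝ)
    (h0 : ∀ b, 0 ≤ w b) (h1 : ∑ b, w b = 1) (hg : ∀ b, |g b| ≤ D) :
    |∑ b, w b * g b| ≤ D := by
  calc |∑ b, w b * g b| ≤ ∑ b, |w b * g b| := Finset.abs_sum_le_sum_abs _ _
    _ ≤ ∑ b, w b * D := by
        refine Finset.sum_le_sum fun b _ => ?_
        rw [abs_mul, abs_of_nonneg (h0 b)]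
        exact mul_le_mul_of_nonneg_left (hg b) (h0 b)
    _ = D := by rw [← Finset.sum_mul, h1, one_mul]

/-- A sum over a finite type is bounded by the cardinality times a bound on the terms. -/
theorem sum_bound {B : Type*} [Fintype B] (g : B → ℝ) (D : ℝ) (hg : ∀ b, |g b| ≤ D) :
    |∑ b, g b| ≤ (Fintype.card B : ℝ) * D := by
  calc |∑ b, g b| ≤ ∑ b, |g b| := Finset.abs_sum_le_sum_abs _ _
    _ ≤ ∑ _b : B, D := Finset.sum_le_sum fun b _ => hg b
    _ = (Fintype.card B : ℝ) * D := by simp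

/-- Lemma (simulation): if the transition/reward parameters of two MDPs over the
same state and action spaces are `ε'`-close, with
`ε' = (1-γ)² ε / (|X| (1-γ+R⁰))`, then for every stationary policy the value
functions of the two MDPs are `ε`-close. The value functions are characterized
as the (unique) solutions of the Bellman equations. -/
theorem stmt_0
    {X A : Type*} [Fintype X] [Nonempty X] [Fintype A] [Nonempty A]
    (γ : ℝ) (hγ0 : 0 ≤ γ) (hγ1 : γ < 1)
    (P Pbar R Rbar : X → A → X → ℝ) (R0 : ℝ)
    (hP0 : ∀ x a y, 0 ≤ P x a y) (hP1 : ∀ x a, ∑ y, P x a y = 1)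
    (hPbar0 : ∀ x a y, 0 ≤ Pbar x a y) (hPbar1 : ∀ x a, ∑ y, Pbar x a y = 1)
    (hR : ∀ x a y, 0 ≤ R x a y ∧ R x a y ≤ R0)
    (ε ε' : ℝ) (hε : 0 < ε)
    (hε' : ε' = (1 - γ) ^ 2 * ε / ((Fintype.card X : ℝ) * (1 - γ + R0)))
    (hclose1 : ∀ x a y, |P x a y * R x a y - Pbar x a y * Rbar x a y| ≤ ε')
    (hclose2 : ∀ x a y, |P x a y - Pbar x a y| ≤ ε')
    (π : X → A → ℝ) (hπ0 : ∀ x a, 0 ≤ π x a) (hπ1 : ∀ x, ∑ a, π x a = 1)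
    (Q Qbar : X → A → ℝ)
    (hQ : ∀ x a, Q x a = ∑ y, P x a y * (R x a y + γ * ∑ b, π y b * Q y b))
    (hQbar : ∀ x a,
      Qbar x a = ∑ y, Pbar x a y * (Rbar x a y + γ * ∑ b, π y b * Qbar y b)) :
    ∀ x a, |Q x a - Qbar x a| ≤ ε := by
  obtain ⟨x0⟩ := ‹Nonempty X›
  obtain ⟨a0⟩ := ‹Nonempty A›
  have : Nonempty X := ⟨x0⟩
  have : Nonempty A := ⟨a0⟩
  have hR0 : 0 ≤ R0 := (hR x0 a0 x0).1.trans (hR x0 a0 x0).2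
  have hg : 0 < 1 - γ := by linarith
  have hn : (0 : ℝ) < Fintype.card X := by exact_mod_cast Fintype.card_pos
  have hε'0 : 0 ≤ ε' := (abs_nonneg _).trans (hclose2 x0 a0 x0)
  have hQb : ∀ x a, |Q x a| ≤ R0 / (1 - γ) := by
    refine contraction_bound γ R0 hγ1 Q fun D hD x a => ?_
    rw [hQ x a]
    refine average_bound _ _ _ (hP0 x a) (hP1 x a) fun y => ?_
    have hv := average_bound (π y) (Q y) D (hπ0 y) (hπ1 y) (hD y)
    refine (abs_add_le _ _).trans (add_le_add ?_ ?_)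
    · rw [abs_of_nonneg (hR x a y).1]
      exact (hR x a y).2
    · rw [abs_mul, abs_of_nonneg hγ0]
      exact mul_le_mul_of_nonneg_left hv hγ0
  have hV : ∀ y, |∑ b, π y b * Q y b| ≤ R0 / (1 - γ) := fun y =>
    average_bound (π y) (Q y) _ (hπ0 y) (hπ1 y) (hQb y)
  have key := contraction_bound γ
    ((Fintype.card X : ℝ) * ε' + γ * ((Fintype.card X : ℝ) * (ε' * (R0 / (1 - γ))))) hγ1
    (fun x a => Q x a - Qbar x a) (fun D hD x a => by
      have hdec : Q x a - Qbar x a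
          = ∑ y, (P x a y * R x a y - Pbar x a y * Rbar x a y)
            + γ * ∑ y, (P x a y - Pbar x a y) * ∑ b, π y b * Q y b
            + γ * ∑ y, Pbar x a y * ∑ b, π y b * (Q y b - Qbar y b) := by
        rw [hQ x a, hQbar x a]
        have hd : ∀ y, ∑ b, π y b * (Q y b - Qbar y b)
            = ∑ b, π y b * Q y b - ∑ b, π y b * Qbar y b := fun y => by
          rw [← Finset.sum_sub_distrib]
          exact Finset.sum_congr rfl fun b _ => mul_sub _ _ _
        simp only [hd]
        rw [← Finset.sum_sub_distrib, Finset.mul_sum Finset.univ _ γ,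
          Finset.mul_sum Finset.univ _ γ, ← Finset.sum_add_distrib, ← Finset.sum_add_distrib]
        refine Finset.sum_congr rfl fun y _ => ?_
        ring
      have e1 := sum_bound _ ε' (hclose1 x a)
      have e2 := sum_bound (fun y => (P x a y - Pbar x a y) * ∑ b, π y b * Q y b)
        (ε' * (R0 / (1 - γ))) (fun y => by
          rw [abs_mul]
          exact mul_le_mul (hclose2 x a y) (hV y) (abs_nonneg _) hε'0)
      have e3 := average_bound (Pbar x a) (fun y => ∑ b, π y b * (Q y b - Qbar y b)) D
        (hPbar0 x a) (hPbar1 x a)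
        (fun y => average_bound (π y) (fun b => Q y b - Qbar y b) D (hπ0 y) (hπ1 y) (hD y))
      show |Q x a - Qbar x a| ≤ _
      rw [hdec]
      refine (abs_add_le _ _).trans (add_le_add ((abs_add_le _ _).trans (add_le_add e1 ?_)) ?_)
      · rw [abs_mul, abs_of_nonneg hγ0]
        exact mul_le_mul_of_nonneg_left e2 hγ0
      · rw [abs_mul, abs_of_nonneg hγ0]
        exact mul_le_mul_of_nonneg_left e3 hγ0)
  intro x a
  refine (key x a).trans ?_
  have hs : 0 < 1 - γ + R0 := by linarith
  have heq : ((Fintype.card X : ℝ) * ε' + γ * ((Fintype.card X : ℝ) * (ε' * (R0 / (1 - γ)))))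
      / (1 - γ) = ε * ((1 - γ + γ * R0) / (1 - γ + R0)) := by
    rw [hε']
    field_simp
  rw [heq]
  have : (1 - γ + γ * R0) / (1 - γ + R0) ≤ 1 := by
    rw [div_le_one hs]
    nlinarith
  nlinarith
end

section
/- Let M = (X, A, P, R, γ) be a finite MDP, let M₁ = (X, A, P₁, R₁, γ) and M₂ = (X, A, P₂, R₂, γ) be two further MDPs over the same X, A, γ, and suppose the rewards of M satisfy 0 ≤ R(x,a,y) ≤ R⁰ for all (x,a,y). Let ε > 0 and set ε' := (1−γ)² ε / ( |X| (1 − γ + R⁰) ). If for each i ∈ {1,2} one has |P(x,a,y) R(x,a,y) − Pᵢ(x,a,y) Rᵢ(x,a,y)| ≤ ε' and |P(x,a,y) − Pᵢ(x,a,y)| ≤ ε' for all (x,a,y), then for every stationary policy π and every (x,a) ∈ X × A, |Q^π_{M₁}(x,a) − Q^π_{M₂}(x,a)| ≤ 2ε. -/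
lemma aux_avg {X A : Type*} [Fintype X] [Fintype A]
    (P : X → ℝ) (π : X → A → ℝ) (hP0 : ∀ y, 0 ≤ P y) (hP1 : ∑ y, P y = 1)
    (hπ0 : ∀ x a, 0 ≤ π x a) (hπ1 : ∀ x, ∑ a, π x a = 1)
    (d : X → A → ℝ) (m : ℝ) (hm : ∀ x a, |d x a| ≤ m) :
    |∑ y, P y * ∑ b, π y b * d y b| ≤ m := by
  have hV : ∀ y, |∑ b, π y b * d y b| ≤ m := by
    intro y
    calc |∑ b, π y b * d y b| ≤ ∑ b, |π y b * d y b| := Finset.abs_sum_le_sum_abs _ _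
      _ ≤ ∑ b, π y b * m := by
          refine Finset.sum_le_sum fun b _ => ?_
          rw [abs_mul, abs_of_nonneg (hπ0 y b)]
          exact mul_le_mul_of_nonneg_left (hm y b) (hπ0 y b)
      _ = m := by rw [← Finset.sum_mul, hπ1, one_mul]
  calc |∑ y, P y * ∑ b, π y b * d y b| ≤ ∑ y, |P y * ∑ b, π y b * d y b| :=
        Finset.abs_sum_le_sum_abs _ _
    _ ≤ ∑ y, P y * m := by
        refine Finset.sum_le_sum fun y _ => ?_
        rw [abs_mul, abs_of_nonneg (hP0 y)]
        exact mul_le_mul_of_nonneg_left (hV y) (hP0 y)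
    _ = m := by rw [← Finset.sum_mul, hP1, one_mul]

lemma aux_bound {X A : Type*} [Fintype X] [Nonempty X] [Fintype A] [Nonempty A]
    (γ : ℝ) (hγ0 : 0 ≤ γ) (hγ1 : γ < 1)
    (P : X → A → X → ℝ) (π : X → A → ℝ)
    (hP0 : ∀ x a y, 0 ≤ P x a y) (hP1 : ∀ x a, ∑ y, P x a y = 1)
    (hπ0 : ∀ x a, 0 ≤ π x a) (hπ1 : ∀ x, ∑ a, π x a = 1)
    (d : X → A → ℝ) (c : ℝ)
    (hd : ∀ x a, |d x a - γ * ∑ y, P x a y * ∑ b, π y b * d y b| ≤ c) :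
    ∀ x a, |d x a| ≤ c / (1 - γ) := by
  obtain ⟨⟨x0, a0⟩, h0⟩ := Finite.exists_max (fun p : X × A => |d p.1 p.2|)
  have hm : ∀ x a, |d x a| ≤ |d x0 a0| := fun x a => h0 (x, a)
  have h1 := aux_avg (P x0 a0) π (hP0 x0 a0) (hP1 x0 a0) hπ0 hπ1 d _ hm
  have h2 := hd x0 a0
  set S := ∑ y, P x0 a0 y * ∑ b, π y b * d y b
  have h3 : |d x0 a0| ≤ c + γ * |d x0 a0| := by
    have := abs_add_le (d x0 a0 - γ * S) (γ * S)
    rw [sub_add_cancel, abs_mul γ, abs_of_nonneg hγ0] at this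
    have := mul_le_mul_of_nonneg_left h1 hγ0
    linarith
  intro x a
  refine (hm x a).trans ?_
  rw [le_div_iff₀ (by linarith)]
  linarith

lemma aux_exists {X A : Type*} [Fintype X] [Nonempty X] [Fintype A] [Nonempty A]
    (γ : ℝ) (hγ0 : 0 ≤ γ) (hγ1 : γ < 1)
    (P : X → A → X → ℝ) (π : X → A → ℝ)
    (hP0 : ∀ x a y, 0 ≤ P x a y) (hP1 : ∀ x a, ∑ y, P x a y = 1)
    (hπ0 : ∀ x a, 0 ≤ π x a) (hπ1 : ∀ x, ∑ a, π x a = 1) (r : X → A → ℝ) :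
    ∃ Q : X → A → ℝ, ∀ x a, Q x a - γ * ∑ y, P x a y * ∑ b, π y b * Q y b = r x a := by
  let L : (X → A → ℝ) →ₗ[ℝ] (X → A → ℝ) :=
    { toFun := fun Q x a => Q x a - γ * ∑ y, P x a y * ∑ b, π y b * Q y b
      map_add' := by
        intro f g
        funext x a
        simp only [Pi.add_apply, mul_add, Finset.sum_add_distrib]
        ring
      map_smul' := by
        intro k f
        funext x a
        simp only [Pi.smul_apply, smul_eq_mul, RingHom.id_apply, mul_sub, Finset.mul_sum]
        congr 1
        refine Finset.sum_congr rfl fun y _ => Finset.sum_congr rfl fun b _ => ?_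
        ring }
  have hinj : Function.Injective L := by
    rw [← LinearMap.ker_eq_bot, LinearMap.ker_eq_bot']
    intro f hf
    funext x a
    have := aux_bound γ hγ0 hγ1 P π hP0 hP1 hπ0 hπ1 f 0 (by
      intro x a
      have h : L f x a = 0 := by rw [hf]; rfl
      change |L f x a| ≤ 0
      rw [h, abs_zero]) x a
    rw [zero_div] at this
    exact abs_nonpos_iff.mp this
  obtain ⟨Q, hQ⟩ := LinearMap.injective_iff_surjective.mp hinj r
  exact ⟨Q, fun x a => congrFun (congrFun hQ x) a⟩

lemma aux_close {X A : Type*} [Fintype X] [Nonempty X] [Fintype A] [Nonempty A]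
    (γ : ℝ) (hγ0 : 0 ≤ γ) (hγ1 : γ < 1)
    (P P1 R R1 : X → A → X → ℝ) (R0 : ℝ)
    (hP10 : ∀ x a y, 0 ≤ P1 x a y) (hP11 : ∀ x a, ∑ y, P1 x a y = 1)
    (hR0 : 0 ≤ R0)
    (ε ε' : ℝ) (hε : 0 < ε)
    (hε' : ε' = (1 - γ) ^ 2 * ε / ((Fintype.card X : ℝ) * (1 - γ + R0)))
    (hclose11 : ∀ x a y, |P x a y * R x a y - P1 x a y * R1 x a y| ≤ ε')
    (hclose12 : ∀ x a y, |P x a y - P1 x a y| ≤ ε')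
    (π : X → A → ℝ) (hπ0 : ∀ x a, 0 ≤ π x a) (hπ1 : ∀ x, ∑ a, π x a = 1)
    (Q Q1 : X → A → ℝ)
    (hQ : ∀ x a, Q x a - γ * ∑ y, P x a y * ∑ b, π y b * Q y b = ∑ y, P x a y * R x a y)
    (hQb : ∀ x a, |Q x a| ≤ R0 / (1 - γ))
    (hQ1 : ∀ x a, Q1 x a = ∑ y, P1 x a y * (R1 x a y + γ * ∑ b, π y b * Q1 y b)) :
    ∀ x a, |Q x a - Q1 x a| ≤ ε := by
  classical
  have hg : 0 < 1 - γ := by linarith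
  have hN : (0 : ℝ) < Fintype.card X := by exact_mod_cast Fintype.card_pos
  have hD : 0 < 1 - γ + R0 := by linarith
  have hB : 0 ≤ R0 / (1 - γ) := by positivity
  have he : 0 ≤ ε' := by rw [hε']; positivity
  have hV : ∀ y, |∑ b, π y b * Q y b| ≤ R0 / (1 - γ) := by
    intro y
    have := aux_avg (fun z : X => if z = y then (1 : ℝ) else 0) π
      (fun z => by split_ifs <;> norm_num) (by simp) hπ0 hπ1 Q _ hQb
    simpa using this
  have key : ∀ x a, |(fun x a => Q x a - Q1 x a) x a - γ * ∑ y, P1 x a y * ∑ b, π y b *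
      (fun x a => Q x a - Q1 x a) y b| ≤ Fintype.card X * (ε' + γ * (ε' * (R0 / (1 - γ)))) := by
    intro x a
    have h : (fun x a => Q x a - Q1 x a) x a - γ * ∑ y, P1 x a y * ∑ b, π y b *
      (fun x a => Q x a - Q1 x a) y b = ∑ y, ((P x a y * R x a y - P1 x a y * R1 x a y)
        + γ * ((P x a y - P1 x a y) * ∑ b, π y b * Q y b)) := by
      have e := hQ x a
      have e1 := hQ1 x a
      simp only [mul_sub, sub_mul, mul_add, Finset.sum_add_distrib, Finset.sum_sub_distrib,
        mul_left_comm _ γ, ← Finset.mul_sum] at e e1 ⊢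
      linarith
    rw [h]
    refine (Finset.abs_sum_le_sum_abs _ _).trans ?_
    calc _ ≤ ∑ y : X, (ε' + γ * (ε' * (R0 / (1 - γ)))) := by
          refine Finset.sum_le_sum fun y _ => ?_
          refine (abs_add_le _ _).trans (add_le_add (hclose11 x a y) ?_)
          rw [abs_mul, abs_of_nonneg hγ0, abs_mul]
          exact mul_le_mul_of_nonneg_left
            (mul_le_mul (hclose12 x a y) (hV y) (abs_nonneg _) he) hγ0
      _ = _ := by simp [mul_add]
  intro x a
  refine (aux_bound γ hγ0 hγ1 P1 π hP10 hP11 hπ0 hπ1 _ _ key x a).trans ?_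
  have : Fintype.card X * (ε' + γ * (ε' * (R0 / (1 - γ)))) / (1 - γ)
      = ε * ((1 - γ + γ * R0) / (1 - γ + R0)) := by
    rw [hε']; field_simp
  rw [this]
  refine mul_le_of_le_one_right hε.le ?_
  rw [div_le_one hD]
  nlinarith


/-- If two MDPs `M₁`, `M₂` are both `ε'`-close (in transition probabilities and
`P·R` products) to a reference MDP `M` with rewards in `[0, R⁰]`, with
`ε' = (1-γ)² ε / (|X| (1-γ+R⁰))`, then for every stationary policy the value
functions of `M₁` and `M₂` are `2ε`-close. -/
theorem stmt_2
    {X A : Type*} [Fintype X] [Nonempty X] [Fintype A] [Nonempty A]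
    (γ : ℝ) (hγ0 : 0 ≤ γ) (hγ1 : γ < 1)
    (P P1 P2 R R1 R2 : X → A → X → ℝ) (R0 : ℝ)
    (hP0 : ∀ x a y, 0 ≤ P x a y) (hP1 : ∀ x a, ∑ y, P x a y = 1)
    (hP10 : ∀ x a y, 0 ≤ P1 x a y) (hP11 : ∀ x a, ∑ y, P1 x a y = 1)
    (hP20 : ∀ x a y, 0 ≤ P2 x a y) (hP21 : ∀ x a, ∑ y, P2 x a y = 1)
    (hR : ∀ x a y, 0 ≤ R x a y ∧ R x a y ≤ R0)
    (ε ε' : ℝ) (hε : 0 < ε)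
    (hε' : ε' = (1 - γ) ^ 2 * ε / ((Fintype.card X : ℝ) * (1 - γ + R0)))
    (hclose11 : ∀ x a y, |P x a y * R x a y - P1 x a y * R1 x a y| ≤ ε')
    (hclose12 : ∀ x a y, |P x a y - P1 x a y| ≤ ε')
    (hclose21 : ∀ x a y, |P x a y * R x a y - P2 x a y * R2 x a y| ≤ ε')
    (hclose22 : ∀ x a y, |P x a y - P2 x a y| ≤ ε')
    (π : X → A → ℝ) (hπ0 : ∀ x a, 0 ≤ π x a) (hπ1 : ∀ x, ∑ a, π x a = 1)
    (Q1 Q2 : X → A → ℝ)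
    (hQ1 : ∀ x a, Q1 x a = ∑ y, P1 x a y * (R1 x a y + γ * ∑ b, π y b * Q1 y b))
    (hQ2 : ∀ x a, Q2 x a = ∑ y, P2 x a y * (R2 x a y + γ * ∑ b, π y b * Q2 y b)) :
    ∀ x a, |Q1 x a - Q2 x a| ≤ 2 * ε := by
  classical
  have hR0 : 0 ≤ R0 := by
    obtain ⟨x⟩ := ‹Nonempty X›
    obtain ⟨a⟩ := ‹Nonempty A›
    exact (hR x a x).1.trans (hR x a x).2
  obtain ⟨Q, hQ⟩ := aux_exists γ hγ0 hγ1 P π hP0 hP1 hπ0 hπ1 (fun x a => ∑ y, P x a y * R x a y)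
  have hQb := aux_bound γ hγ0 hγ1 P π hP0 hP1 hπ0 hπ1 Q R0 (by
    intro x a
    rw [hQ, abs_of_nonneg (Finset.sum_nonneg fun y _ => mul_nonneg (hP0 x a y) (hR x a y).1)]
    calc ∑ y, P x a y * R x a y ≤ ∑ y, P x a y * R0 :=
          Finset.sum_le_sum fun y _ => mul_le_mul_of_nonneg_left (hR x a y).2 (hP0 x a y)
      _ = R0 := by rw [← Finset.sum_mul, hP1, one_mul])
  intro x a
  have h1 := aux_close γ hγ0 hγ1 P P1 R R1 R0 hP10 hP11 hR0 ε ε' hε hε' hclose11 hclose12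
    π hπ0 hπ1 Q Q1 hQ hQb hQ1 x a
  have h2 := aux_close γ hγ0 hγ1 P P2 R R2 R0 hP20 hP21 hR0 ε ε' hε hε' hclose21 hclose22
    π hπ0 hπ1 Q Q2 hQ hQb hQ2 x a
  rw [abs_le] at *
  constructor <;> linarith
end

section
/- Let X be a finite nonempty set, γ ∈ [0,1), ε ≥ 0, β ≥ 0, let N be a positive integer, let R_max > 0 and set V_max := R_max/(1−γ). Let p : X → ℝ satisfy p(y) ≥ 0 for all y and Σ_{y∈X} p(y) ≤ 1, let r : X → ℝ, let q ∈ ℝ, and let V*, V : X → ℝ satisfy V(y) ≥ V*(y) − ε for all y ∈ X. If Σ_{y∈X} p(y) ( r(y) + γ V*(y) ) ≥ q − β/√N and R_max/( N(1−γ) ) + (1−γ) ε ≥ β/√N, then Σ_{y∈X} p(y) ( r(y) + γ V(y) ) + V_max / N ≥ q − ε. -/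
/-- Induction step in the proof that the optimistic initial model preserves
optimism under dynamic-programming updates. -/
theorem stmt_8
    {X : Type*} [Fintype X] [Nonempty X]
    (γ ε β : ℝ) (hγ0 : 0 ≤ γ) (hγ1 : γ < 1) (hε : 0 ≤ ε) (hβ : 0 ≤ β)
    (N : ℕ) (hN : 0 < N)
    (Rmax Vmax : ℝ) (hRmax : 0 < Rmax) (hVmax : Vmax = Rmax / (1 - γ))
    (p : X → ℝ) (hp0 : ∀ y, 0 ≤ p y) (hp1 : ∑ y, p y ≤ 1)
    (r : X → ℝ) (q : ℝ) (Vstar V : X → ℝ)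
    (hV : ∀ y, V y ≥ Vstar y - ε)
    (h1 : ∑ y, p y * (r y + γ * Vstar y) ≥ q - β / Real.sqrt N)
    (h2 : Rmax / (N * (1 - γ)) + (1 - γ) * ε ≥ β / Real.sqrt N) :
    ∑ y, p y * (r y + γ * V y) + Vmax / N ≥ q - ε := by
  have e : Vmax / N = Rmax / (N * (1 - γ)) := by
    rw [hVmax, div_div, mul_comm]
  have h3 : ∑ y, p y * (r y + γ * Vstar y) - (γ * ε) * ∑ y, p y
      ≤ ∑ y, p y * (r y + γ * V y) := by
    rw [Finset.mul_sum, ← Finset.sum_sub_distrib]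
    apply Finset.sum_le_sum
    intro y _
    have h4 : 0 ≤ p y * γ * (V y - (Vstar y - ε)) :=
      mul_nonneg (mul_nonneg (hp0 y) hγ0) (sub_nonneg.mpr (hV y))
    linarith
  have h5 : (γ * ε) * ∑ y, p y ≤ (γ * ε) * 1 :=
    mul_le_mul_of_nonneg_left hp1 (mul_nonneg hγ0 hε)
  rw [e]
  linarith
end

section
/- Let M = (X, A, P, R, γ) and M̄ = (X, A, P̄, R̄, γ) be two finite MDPs over the same state set X, action set A and discount γ ∈ [0,1), both with rewards in [0, R⁰] (i.e., 0 ≤ R(x,a,y) ≤ R⁰ and 0 ≤ R̄(x,a,y) ≤ R⁰ for all (x,a,y)). Let K ⊆ X × A be a set of state–action pairs on which M and M̄ agree: P(x,a,y) = P̄(x,a,y) and R(x,a,y) = R̄(x,a,y) for all (x,a) ∈ K and y ∈ X. Fix a stationary policy π, a positive integer H, and (x,a) ∈ X × A, and let A_M ⊆ Ξ be the set of H-step trajectories from (x,a) that contain some state–action pair (x_t, a_t) ∉ K (for some 0 ≤ t ≤ H−1). Then Q^π_M(x,a,H) ≥ Q^π_M̄(x,a,H) − ( R⁰/(1−γ)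 ) · Pr^π_M(A_M), where Pr^π_M(A_M) := Σ_{ξ ∈ A_M} Pr^π_M(ξ). -/
open Finset

/-- An `H`-step trajectory: states `x₀, …, x_H` and actions `a₀, …, a_{H-1}`. -/
abbrev Traj (X A : Type*) (H : ℕ) := (Fin (H + 1) → X) × (Fin H → A)

/-- Probability of an `H`-step trajectory under policy `π` in the MDP with
transition function `P`:
`(∏_{t=1}^{H-1} P(x_{t-1},a_{t-1},x_t) π(x_t,a_t)) · P(x_{H-1},a_{H-1},x_H)`,
i.e. `(∏_{t=0}^{H-1} P(x_t,a_t,x_{t+1})) · (∏_{t=1}^{H-1} π(x_t,a_t))`. -/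
def trajProb {X A : Type*} [Fintype X] [Fintype A]
    (P : X → A → X → ℝ) (π : X → A → ℝ) (H : ℕ) (ξ : Traj X A H) : ℝ :=
  (∏ t : Fin H, P (ξ.1 t.castSucc) (ξ.2 t) (ξ.1 t.succ)) *
    ∏ t ∈ univ.filter (fun t : Fin H => (t : ℕ) ≠ 0), π (ξ.1 t.castSucc) (ξ.2 t)

/-- Discounted total reward along an `H`-step trajectory:
`∑_{t=0}^{H-1} γ^t R(x_t,a_t,x_{t+1})`. -/
def trajReward {X A : Type*} [Fintype X] [Fintype A]
    (R : X → A → X → ℝ) (γ : ℝ) (H : ℕ) (ξ : Traj X A H) : ℝ :=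
  ∑ t : Fin H, γ ^ (t : ℕ) * R (ξ.1 t.castSucc) (ξ.2 t) (ξ.1 t.succ)

/-- The `H`-step value `Q^π_M(x,a,H)`: the sum, over all `H`-step trajectories
starting with `x₀ = x`, `a₀ = a`, of the trajectory probability times its
discounted reward. -/
def Qstep {X A : Type*} [Fintype X] [Fintype A] [DecidableEq X] [DecidableEq A]
    (P R : X → A → X → ℝ) (π : X → A → ℝ) (γ : ℝ) (H : ℕ) [NeZero H]
    (x : X) (a : A) : ℝ :=
  ∑ ξ ∈ univ.filter (fun ξ : Traj X A H => ξ.1 0 = x ∧ ξ.2 0 = a),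
    trajProb P π H ξ * trajReward R γ H ξ

theorem sum_cons_aux {X : Type*} [Fintype X] (n : ℕ) (g : (Fin (n + 1) → X) → ℝ) :
    ∑ s, g s = ∑ x : X, ∑ s' : Fin n → X, g (Fin.cons x s') := by
  rw [← (Fin.consEquiv (fun _ : Fin (n + 1) => X)).sum_comp, Fintype.sum_prod_type]
  rfl

theorem mass_aux {X A : Type*} [Fintype X] [Fintype A]
    (P : X → A → X → ℝ) (hP1 : ∀ x a, ∑ y, P x a y = 1)
    (π : X → A → ℝ) (hπ1 : ∀ x, ∑ a, π x a = 1) (n : ℕ) :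
    ∀ f : X → ℝ, ∑ s : Fin (n + 1) → X, ∑ u : Fin n → A,
      f (s 0) * ((∏ t : Fin n, P (s t.castSucc) (u t) (s t.succ)) *
        ∏ t : Fin n, π (s t.castSucc) (u t)) = ∑ x, f x := by
  induction n with
  | zero =>
    intro f
    rw [sum_cons_aux]
    simp
  | succ n ih =>
    intro f
    rw [sum_cons_aux]
    refine Finset.sum_congr rfl fun x _ => ?_
    have h : ∀ s' : Fin (n + 1) → X, ∀ b : A, ∀ u' : Fin n → A,
        f ((Fin.cons x s' : Fin (n + 2) → X) 0) *
          ((∏ t : Fin (n + 1), P ((Fin.cons x s' : Fin (n + 2) → X) t.castSucc)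
            ((Fin.cons b u' : Fin (n + 1) → A) t) ((Fin.cons x s' : Fin (n + 2) → X) t.succ)) *
          ∏ t : Fin (n + 1), π ((Fin.cons x s' : Fin (n + 2) → X) t.castSucc)
            ((Fin.cons b u' : Fin (n + 1) → A) t)) =
        f x * π x b * (P x b (s' 0) * ((∏ t : Fin n, P (s' t.castSucc) (u' t) (s' t.succ)) *
          ∏ t : Fin n, π (s' t.castSucc) (u' t))) := by
      intro s' b u'
      simp only [Fin.prod_univ_succ, Fin.cons_zero, Fin.cons_succ, Fin.castSucc_zero,
        ← Fin.succ_castSucc]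
      ring
    simp_rw [sum_cons_aux n (X := A), h]
    rw [Finset.sum_comm]
    simp_rw [← Finset.mul_sum]
    calc _ = ∑ b, f x * π x b := by
          refine Finset.sum_congr rfl fun b _ => ?_
          have := ih (fun y => P x b y)
          simp only [hP1, Finset.mul_sum] at this ⊢
          simp only [← Finset.mul_sum] at this ⊢
          rw [this, mul_one]
      _ = f x := by rw [← Finset.mul_sum, hπ1, mul_one]

theorem trajProb_total {X A : Type*} [Fintype X] [Fintype A] [DecidableEq X] [DecidableEq A]
    (P : X → A → X → ℝ) (hP1 : ∀ x a, ∑ y, P x a y = 1)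
    (π : X → A → ℝ) (hπ1 : ∀ x, ∑ a, π x a = 1) (n : ℕ) (x : X) (a : A) :
    ∑ ξ ∈ univ.filter (fun ξ : Traj X A (n + 1) => ξ.1 0 = x ∧ ξ.2 0 = a),
      trajProb P π (n + 1) ξ = 1 := by
  rw [Finset.sum_filter, Fintype.sum_prod_type, sum_cons_aux]
  simp_rw [sum_cons_aux n (X := A)]
  have h : ∀ s' : Fin (n + 1) → X, ∀ u' : Fin n → A,
      trajProb P π (n + 1) (Fin.cons x s', Fin.cons a u') =
        P x a (s' 0) * ((∏ t : Fin n, P (s' t.castSucc) (u' t) (s' t.succ)) *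
          ∏ t : Fin n, π (s' t.castSucc) (u' t)) := by
    intro s' u'
    unfold trajProb
    rw [Finset.prod_filter]
    simp only [Fin.prod_univ_succ, Fin.cons_zero, Fin.cons_succ, Fin.castSucc_zero,
        ← Fin.succ_castSucc]
    simp [mul_assoc]
  have h2 := mass_aux P hP1 π hπ1 n (fun y => P x a y)
  rw [hP1] at h2
  rw [← h2, Finset.sum_eq_single x]
  · refine Finset.sum_congr rfl fun s' _ => ?_
    rw [Finset.sum_eq_single a]
    · refine Finset.sum_congr rfl fun u' _ => ?_
      rw [← h, if_pos]
      simp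
    · intro b _ hb
      simp [hb]
    · simp
  · intro y _ hy
    simp [hy]
  · simp

/-- Lemma (exploration event): if the MDPs `M` and `M̄` agree on a set `K` of
state–action pairs, then for any policy `π`, horizon `H` and start `(x,a)`,
`Q^π_M(x,a,H) ≥ Q^π_M̄(x,a,H) − (R⁰/(1−γ)) · Pr^π_M(A_M)`, where `A_M` is the
event that the `H`-step trajectory (generated by `π` in `M` from `(x,a)`)
visits a state–action pair outside `K`. -/
theorem stmt_9
    {X A : Type*} [Fintype X] [Nonempty X] [Fintype A] [Nonempty A]
    [DecidableEq X] [DecidableEq A]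
    (γ : ℝ) (hγ0 : 0 ≤ γ) (hγ1 : γ < 1)
    (P Pbar R Rbar : X → A → X → ℝ) (R0 : ℝ)
    (hP0 : ∀ x a y, 0 ≤ P x a y) (hP1 : ∀ x a, ∑ y, P x a y = 1)
    (hPbar0 : ∀ x a y, 0 ≤ Pbar x a y) (hPbar1 : ∀ x a, ∑ y, Pbar x a y = 1)
    (hR : ∀ x a y, 0 ≤ R x a y ∧ R x a y ≤ R0)
    (hRbar : ∀ x a y, 0 ≤ Rbar x a y ∧ Rbar x a y ≤ R0)
    (K : Set (X × A)) [DecidablePred (· ∈ K)]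
    (hKP : ∀ x a y, (x, a) ∈ K → P x a y = Pbar x a y)
    (hKR : ∀ x a y, (x, a) ∈ K → R x a y = Rbar x a y)
    (π : X → A → ℝ) (hπ0 : ∀ x a, 0 ≤ π x a) (hπ1 : ∀ x, ∑ a, π x a = 1)
    (H : ℕ) [NeZero H] (x : X) (a : A) :
    Qstep P R π γ H x a ≥
      Qstep Pbar Rbar π γ H x a -
        R0 / (1 - γ) *
          ∑ ξ ∈ Finset.univ.filter (fun ξ : Traj X A H =>
              (ξ.1 0 = x ∧ ξ.2 0 = a) ∧
                ∃ t : Fin H, (ξ.1 t.castSucc, ξ.2 t) ∉ K),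
            trajProb P π H ξ := by
  obtain ⟨n, rfl⟩ : ∃ n, H = n + 1 := ⟨H - 1, by have := NeZero.ne H; omega⟩
  have hp0 : ∀ p : X → A → X → ℝ, (∀ x a y, 0 ≤ p x a y) → ∀ ξ, 0 ≤ trajProb p π (n + 1) ξ := by
    intro p hp ξ
    exact mul_nonneg (Finset.prod_nonneg fun _ _ => hp _ _ _)
      (Finset.prod_nonneg fun _ _ => hπ0 _ _)
  have hr0 : ∀ ξ, 0 ≤ trajReward R γ (n + 1) ξ := fun ξ =>
    Finset.sum_nonneg fun t _ => mul_nonneg (pow_nonneg hγ0 _) (hR _ _ _).1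
  have hR0 : 0 ≤ R0 := (hR x a x).1.trans (hR x a x).2
  have hr1 : ∀ ξ, trajReward Rbar γ (n + 1) ξ ≤ R0 / (1 - γ) := by
    intro ξ
    calc trajReward Rbar γ (n + 1) ξ ≤ ∑ t : Fin (n + 1), γ ^ (t : ℕ) * R0 :=
          Finset.sum_le_sum fun t _ =>
            mul_le_mul_of_nonneg_left (hRbar _ _ _).2 (pow_nonneg hγ0 _)
      _ = (∑ t ∈ Finset.range (n + 1), γ ^ t) * R0 := by
          rw [← Finset.sum_mul, Fin.sum_univ_eq_sum_range (fun t => γ ^ t)]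
      _ ≤ R0 / (1 - γ) := by
          have h1 : 0 < 1 - γ := by linarith
          rw [le_div_iff₀ h1]
          have h2 := geom_sum_mul γ (n + 1)
          have h3 := mul_nonneg (pow_nonneg hγ0 (n + 1)) hR0
          have h4 : (∑ t ∈ Finset.range (n + 1), γ ^ t) * R0 * (1 - γ)
            = -((∑ t ∈ Finset.range (n + 1), γ ^ t) * (γ - 1)) * R0 := by ring
          rw [h4, h2]
          nlinarith
  have T := trajProb_total P hP1 π hπ1 n x a
  have Tb := trajProb_total Pbar hPbar1 π hπ1 n x a
  unfold Qstep
  rw [← Finset.filter_filter (fun ξ : Traj X A (n + 1) => ξ.1 0 = x ∧ ξ.2 0 = a)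
    (fun ξ => ∃ t : Fin (n + 1), (ξ.1 t.castSucc, ξ.2 t) ∉ K)]
  set S := univ.filter (fun ξ : Traj X A (n + 1) => ξ.1 0 = x ∧ ξ.2 0 = a) with hS
  set B : Traj X A (n + 1) → Prop :=
    fun ξ => ∃ t : Fin (n + 1), (ξ.1 t.castSucc, ξ.2 t) ∉ K with hB
  have hg : ∀ ξ, ¬ B ξ → trajProb P π (n + 1) ξ = trajProb Pbar π (n + 1) ξ ∧
      trajReward R γ (n + 1) ξ = trajReward Rbar γ (n + 1) ξ := by
    intro ξ hξ
    simp only [hB, not_exists, not_not] at hξ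
    constructor
    · unfold trajProb
      congr 1
      exact Finset.prod_congr rfl fun t _ => hKP _ _ _ (hξ t)
    · exact Finset.sum_congr rfl fun t _ => by rw [hKR _ _ _ (hξ t)]
  rw [← Finset.sum_filter_add_sum_filter_not S B] at T Tb
  rw [← Finset.sum_filter_add_sum_filter_not S B (fun ξ => trajProb P π (n + 1) ξ * _),
    ← Finset.sum_filter_add_sum_filter_not S B (fun ξ => trajProb Pbar π (n + 1) ξ * _)]
  have e1 : ∑ ξ ∈ S.filter (fun ξ => ¬ B ξ), trajProb P π (n + 1) ξ =
      ∑ ξ ∈ S.filter (fun ξ => ¬ B ξ), trajProb Pbar π (n + 1) ξ :=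
    Finset.sum_congr rfl fun ξ h => (hg ξ (Finset.mem_filter.1 h).2).1
  have e2 : ∑ ξ ∈ S.filter (fun ξ => ¬ B ξ), trajProb P π (n + 1) ξ * trajReward R γ (n + 1) ξ =
      ∑ ξ ∈ S.filter (fun ξ => ¬ B ξ),
        trajProb Pbar π (n + 1) ξ * trajReward Rbar γ (n + 1) ξ :=
    Finset.sum_congr rfl fun ξ h => by
      rw [(hg ξ (Finset.mem_filter.1 h).2).1, (hg ξ (Finset.mem_filter.1 h).2).2]
  have e3 : 0 ≤ ∑ ξ ∈ S.filter B, trajProb P π (n + 1) ξ * trajReward R γ (n + 1) ξ :=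
    Finset.sum_nonneg fun ξ _ => mul_nonneg (hp0 P hP0 ξ) (hr0 ξ)
  have e4 : ∑ ξ ∈ S.filter B, trajProb Pbar π (n + 1) ξ * trajReward Rbar γ (n + 1) ξ ≤
      R0 / (1 - γ) * ∑ ξ ∈ S.filter B, trajProb Pbar π (n + 1) ξ := by
    rw [Finset.mul_sum]
    refine Finset.sum_le_sum fun ξ _ => ?_
    rw [mul_comm]
    exact mul_le_mul_of_nonneg_right (hr1 ξ) (hp0 Pbar hPbar0 ξ)
  have e5 : ∑ ξ ∈ S.filter B, trajProb Pbar π (n + 1) ξ =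
      ∑ ξ ∈ S.filter B, trajProb P π (n + 1) ξ := by linarith
  rw [e5] at e4
  linarith
end
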